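/- Let L^t = K⟨t₁,…,tₘ⟩ and L = K⟨t₁,…,tₘ,x₁,…,xₙ⟩ be free associative K-algebras, with L^t regarded as a subalgebra of L via the inclusion of generators. Let I be a two-sided ideal of L^t generated by homogeneous elements of degree 2, and let ⟨I⟩ be the two-sided ideal of L generated by I. Then the lattice Ω(L^t, I) is distributive if and only if the lattice Ω(L, ⟨I⟩) is distributive. -/

import Mathlib

noncomputable section

/-- The sublattice of the lattice of `K`-subspaces of `W` generated by a set `S` of
subspaces: the smallest collection of subspaces containing `S` and closed under
intersection and sum. -/
def sublatticeGen {K W : Type*} [Field K] [AddCommGroup W] [Module K W]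
    (S : Set (Submodule K W)) : Set (Submodule K W) :=
  ⋂₀ {T : Set (Submodule K W) | S ⊆ T ∧
    (∀ a ∈ T, ∀ b ∈ T, a ⊓ b ∈ T) ∧ (∀ a ∈ T, ∀ b ∈ T, a ⊔ b ∈ T)}

/-- A collection `S` of subspaces of `W` is distributive if the sublattice of subspaces
it generates is distributive. -/
def IsDistributiveCollection {K W : Type*} [Field K] [AddCommGroup W] [Module K W]
    (S : Set (Submodule K W)) : Prop :=
  ∀ a ∈ sublatticeGen S, ∀ b ∈ sublatticeGen S, ∀ c ∈ sublatticeGen S,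
    a ⊓ (b ⊔ c) = (a ⊓ b) ⊔ (a ⊓ c)

/-- The word-length degree-`d` component of the free algebra `K⟨y₁,…,y_s⟩` on `s`
generators: the `d`-th power of the span of the generators. -/
def wordLengthComponent (K : Type*) [Field K] (s : ℕ) (d : ℕ) :
    Submodule K (FreeAlgebra K (Fin s)) :=
  (Submodule.span K (Set.range (FreeAlgebra.ι K : Fin s → FreeAlgebra K (Fin s)))) ^ d

/-- The augmentation ideal `L₊` of the free algebra on `s` generators: the `K`-span of
all words of positive length. -/
def augIdeal (K : Type*) [Field K] (s : ℕ) : Submodule K (FreeAlgebra K (Fin s)) :=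
  ⨆ d : ℕ, wordLengthComponent K s (d + 1)

/-- The two-sided ideal of a `K`-algebra generated by a set `S`, viewed as the `K`-span
of all elements `a * s * b` with `s ∈ S`. -/
def twoSidedSpan (K : Type*) [Field K] {B : Type*} [Ring B] [Algebra K B] (S : Set B) :
    Submodule K B :=
  Submodule.span K {z : B | ∃ a s b, s ∈ S ∧ z = a * s * b}

/-- Powers of a subspace of an algebra, with the convention that the `0`-th power is the
whole algebra. -/
def latticePow {K B : Type*} [Field K] [Ring B] [Algebra K B]
    (U : Submodule K B) : ℕ → Submodule K B
  | 0 => ⊤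
  | (k + 1) => U ^ (k + 1)

/-- The generators `L₊^λ I^μ L₊^ν` of the lattice `Ω(L, I)` associated to an ideal `I`
of the free algebra `L` on `s` generators. -/
def omegaGens (K : Type*) [Field K] (s : ℕ)
    (I : Submodule K (FreeAlgebra K (Fin s))) : Set (Submodule K (FreeAlgebra K (Fin s))) :=
  {V | ∃ lam mu nu : ℕ,
    V = latticePow (augIdeal K s) lam * latticePow I mu * latticePow (augIdeal K s) nu}

/-!
Write `L = K⟨t,x⟩ ⊇ Lᵗ = K⟨t⟩` and let `X` be the span of the new letters `x`.

If `Ω(Lᵗ, I)` is distributive, so is `Ω(L, ⟨I⟩)`: each `L₊^λ ⟨I⟩^μ L₊^ν` is a sum of products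
`U₀XU₁X⋯XUₖ` whose slots `Uᵢ` lie in a finite set of generators of `Ω(Lᵗ, I)`. Finitely many
subspaces that generate a distributive lattice are all spanned by parts of a single basis, hence a
linear automorphism `e` of `Lᵗ` carries them to spans of words. Every element of `L` is a sum of
products `a₀x_{j₁}a₁⋯x_{jₖ}aₖ` with `aᵢ ∈ Lᵗ`, and applying `e` to each factor `aᵢ` is a
well-defined linear automorphism of `L`, which then carries all the products `U₀XU₁X⋯XUₖ` to spans
of words. Spans of words form a distributive lattice, and distributivity involves finitely many
generators at a time.

Conversely, the retraction `L → Lᵗ` that kills `X` and the inverse image under the inclusion both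
take `L₊^λ ⟨I⟩^μ L₊^ν` to the corresponding generator of `Ω(Lᵗ, I)`. Retraction preserves sums and
inverse image preserves intersections, so the distributive law descends.
-/

open Module

section Lattice

variable {T M : Type*} [Lattice T] [Lattice M] [IsModularLattice M] [BoundedOrder M]

theorem sup_inf_of_isCompl {p c a b : M} (h : IsCompl p c)
    (ha : a ≤ c ∨ p ≤ a) (hb : b ≤ c ∨ p ≤ b) : (a ⊔ b) ⊓ c = a ⊓ c ⊔ b ⊓ c := by
  rcases ha with ha | ha
  · rw [sup_inf_assoc_of_le b ha, inf_eq_left.mpr ha]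
  rcases hb with hb | hb
  · rw [sup_comm, sup_inf_assoc_of_le a hb, inf_eq_left.mpr hb, sup_comm]
  have decompose {x : M} (hx : p ≤ x) : x = p ⊔ x ⊓ c := by
    rw [inf_comm, ← sup_inf_assoc_of_le c hx, h.sup_eq_top, top_inf_eq]
  calc (a ⊔ b) ⊓ c = ((a ⊓ c ⊔ b ⊓ c) ⊔ p) ⊓ c := by
        conv_lhs => rw [decompose ha, decompose hb, ← sup_sup_distrib_left, sup_comm]
    _ = a ⊓ c ⊔ b ⊓ c := by
        rw [sup_inf_assoc_of_le p (sup_le inf_le_right inf_le_right), h.inf_eq_bot, sup_bot_eq]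

/-- The lattice homomorphism `t ↦ f t ⊓ c` obtained by splitting off a complement `p` of `c` that
each value of `f` either contains or, by lying in `c`, avoids. -/
def infComplHom (f : LatticeHom T M) {p c : M} (h : IsCompl p c)
    (hf : ∀ t, f t ≤ c ∨ p ≤ f t) : LatticeHom T M where
  toFun t := f t ⊓ c
  map_sup' s t := by rw [map_sup, sup_inf_of_isCompl h (hf s) (hf t)]
  map_inf' s t := by rw [map_inf, inf_inf_distrib_right]

end Lattice

section AdaptedBasis

variable {K W ι : Type*} [Field K] [AddCommGroup W] [Module K W]

/-- A subspace is adapted to a basis if it is spanned by some of the basis vectors. The subspaces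
adapted to a fixed basis form a distributive lattice. -/
def IsAdapted (b : Basis ι K W) (U : Submodule K W) : Prop :=
  ∃ J : Set ι, U = Submodule.span K (b '' J)

theorem span_basis_image_inter (b : Basis ι K W) (I J : Set ι) :
    Submodule.span K (b '' (I ∩ J)) = Submodule.span K (b '' I) ⊓ Submodule.span K (b '' J) := by
  ext x
  simp only [Submodule.mem_inf, b.mem_span_image, Set.subset_inter_iff]

theorem span_basis_image_union (b : Basis ι K W) (I J : Set ι) :
    Submodule.span K (b '' (I ∪ J)) = Submodule.span K (b '' I) ⊔ Submodule.span K (b '' J) := by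
  rw [Set.image_union, Submodule.span_union]

namespace IsAdapted

variable {b : Basis ι K W} {U V : Submodule K W}

theorem inf (hU : IsAdapted b U) (hV : IsAdapted b V) : IsAdapted b (U ⊓ V) := by
  obtain ⟨I, rfl⟩ := hU
  obtain ⟨J, rfl⟩ := hV
  exact ⟨I ∩ J, (span_basis_image_inter b I J).symm⟩

theorem sup (hU : IsAdapted b U) (hV : IsAdapted b V) : IsAdapted b (U ⊔ V) := by
  obtain ⟨I, rfl⟩ := hU
  obtain ⟨J, rfl⟩ := hV
  exact ⟨I ∪ J, (span_basis_image_union b I J).symm⟩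

theorem iSup {κ : Sort*} {U : κ → Submodule K W} (hU : ∀ k, IsAdapted b (U k)) :
    IsAdapted b (⨆ k, U k) := by
  choose J hJ using hU
  exact ⟨⋃ k, J k, by rw [Set.image_iUnion, Submodule.span_iUnion, iSup_congr hJ]⟩

theorem map {W' : Type*} [AddCommGroup W'] [Module K W'] (hU : IsAdapted b U) (e : W ≃ₗ[K] W') :
    IsAdapted (b.map e) (U.map e.toLinearMap) := by
  obtain ⟨J, rfl⟩ := hU
  refine ⟨J, ?_⟩
  rw [Submodule.map_span, ← Set.image_comp]
  rfl

theorem reindex {ι' : Type*} (hU : IsAdapted b U) (e : ι ≃ ι') : IsAdapted (b.reindex e) U := by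
  obtain ⟨J, rfl⟩ := hU
  refine ⟨e '' J, ?_⟩
  rw [← Set.image_comp]
  simp [Function.comp_def]

theorem inf_sup_left {U V X : Submodule K W} (hU : IsAdapted b U) (hV : IsAdapted b V)
    (hX : IsAdapted b X) : U ⊓ (V ⊔ X) = U ⊓ V ⊔ U ⊓ X := by
  obtain ⟨I, rfl⟩ := hU
  obtain ⟨J, rfl⟩ := hV
  obtain ⟨L, rfl⟩ := hX
  simp only [← span_basis_image_union, ← span_basis_image_inter, Set.inter_union_distrib_left]

end IsAdapted

variable {T : Type*} [DistribLattice T]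

/-- The values of `f` disjoint from `p` are closed under `⊔`, so their union is still disjoint
from `p`. -/
theorem exists_isCompl_forall_le_or_le (f : LatticeHom T (Submodule K W)) (t₀ : T)
    (hf : ∀ t, Disjoint (f t₀) (f t) ∨ f t₀ ≤ f t) :
    ∃ C, IsCompl (f t₀) C ∧ ∀ t, f t ≤ C ∨ f t₀ ≤ f t := by
  let 𝒟 : Set (Submodule K W) := f '' {t | Disjoint (f t₀) (f t)}
  have directed : DirectedOn (· ≤ ·) 𝒟 := by
    rintro _ ⟨s, hs, rfl⟩ _ ⟨t, ht, rfl⟩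
    refine ⟨f (s ⊔ t), ⟨_, ?_, rfl⟩, by simp, by simp⟩
    rw [Set.mem_ofPred_eq, disjoint_iff, ← map_inf, _root_.inf_sup_left, map_sup, map_inf, map_inf,
      disjoint_iff.mp hs, disjoint_iff.mp ht, sup_bot_eq]
  have disjoint_sSup : Disjoint (sSup 𝒟) (f t₀) :=
    (directed.disjoint_sSup_right.mpr (by rintro _ ⟨t, ht, rfl⟩; exact ht)).symm
  obtain ⟨C, hC, compl⟩ := disjoint_sSup.exists_isCompl
  exact ⟨C, compl.symm, fun t => (hf t).imp_left fun h =>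
    (le_sSup (Set.mem_image_of_mem f h)).trans hC⟩

theorem exists_ne_bot_forall_disjoint_or_le (f : LatticeHom T (Submodule K W))
    (hfin : (Set.range f).Finite) (hne : ∃ t, f t ≠ ⊥) :
    ∃ t₀, f t₀ ≠ ⊥ ∧ ∀ t, Disjoint (f t₀) (f t) ∨ f t₀ ≤ f t := by
  obtain ⟨t, ht⟩ := hne
  obtain ⟨_, ⟨⟨t₀, rfl⟩, ht₀⟩, minimal⟩ :=
    (hfin.sdiff (t := {⊥})).exists_minimal ⟨f t, ⟨t, rfl⟩, ht⟩
  refine ⟨t₀, ht₀, fun t => or_iff_not_imp_left.mpr fun hdisj => ?_⟩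
  have inf_mem : f t₀ ⊓ f t ∈ Set.range f \ {⊥} :=
    ⟨⟨t₀ ⊓ t, map_inf f t₀ t⟩, fun h => hdisj (disjoint_iff.mpr h)⟩
  exact (minimal inf_mem inf_le_left).trans inf_le_right

theorem ncard_range_infComplHom_lt (f : LatticeHom T (Submodule K W)) (hfin : (Set.range f).Finite)
    {t₀ : T} (ht₀ : f t₀ ≠ ⊥) {C : Submodule K W} (h : IsCompl (f t₀) C)
    (hf : ∀ t, f t ≤ C ∨ f t₀ ≤ f t) :
    (Set.range (infComplHom f h hf) \ {⊥}).ncard < (Set.range f \ {⊥}).ncard := by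
  have subset : Set.range (infComplHom f h hf) \ {⊥} ⊆
      (· ⊓ C) '' ((Set.range f \ {⊥}) \ {f t₀}) := by
    rintro _ ⟨⟨t, rfl⟩, ht⟩
    refine ⟨f t, ⟨⟨⟨t, rfl⟩, fun hbot => ht ?_⟩, fun heq => ht ?_⟩, rfl⟩
    · exact (congrArg (· ⊓ C) hbot).trans (bot_inf_eq C)
    · exact (congrArg (· ⊓ C) heq).trans h.inf_eq_bot
  have hfin' : (Set.range f \ {⊥}).Finite := hfin.sdiff
  calc _ ≤ _ := Set.ncard_le_ncard subset (hfin'.sdiff.image _)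
    _ ≤ _ := Set.ncard_image_le hfin'.sdiff
    _ < _ := Set.ncard_sdiff_singleton_lt_of_mem ⟨⟨t₀, rfl⟩, ht₀⟩ hfin'

theorem exists_linearIndepOn_le_span_inter (f : LatticeHom T (Submodule K W))
    (hfin : (Set.range f).Finite) :
    ∃ B : Set W, LinearIndepOn K id B ∧ B ⊆ ⋃ t, (f t : Set W) ∧
      ∀ t, f t ≤ Submodule.span K (B ∩ f t) := by
  induction hN : (Set.range f \ {⊥}).ncard using Nat.strong_induction_on generalizing f with
  | _ N ih =>
  by_cases hne : ∃ t, f t ≠ ⊥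
  swap
  · push Not at hne
    exact ⟨∅, linearIndepOn_empty K id, Set.empty_subset _, fun t => by simp [hne t]⟩
  obtain ⟨t₀, ht₀, dichotomy⟩ := exists_ne_bot_forall_disjoint_or_le f hfin hne
  obtain ⟨C, compl, hC⟩ := exists_isCompl_forall_le_or_le f t₀ dichotomy
  let g := infComplHom f compl hC
  have hg : (Set.range g).Finite := (hfin.image (· ⊓ C)).subset (by
    rintro _ ⟨t, rfl⟩; exact ⟨f t, ⟨t, rfl⟩, rfl⟩)
  obtain ⟨B, hB, hBC, hBspan⟩ :=
    ih _ (hN ▸ ncard_range_infComplHom_lt f hfin ht₀ compl hC) g hg rfl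
  obtain ⟨B₀, hB₀sub, hB₀span, hB₀⟩ := exists_linearIndependent K (f t₀ : Set W)
  rw [Submodule.span_eq] at hB₀span
  have span_B_le : Submodule.span K B ≤ C :=
    Submodule.span_le.mpr (hBC.trans (Set.iUnion_subset fun t _ hx => hx.2))
  refine ⟨B₀ ∪ B, ?_, ?_, fun t => ?_⟩
  · refine LinearIndepOn.union hB₀ hB ?_
    simpa only [Set.image_id', id, hB₀span] using compl.disjoint.mono_right span_B_le
  · refine Set.union_subset (hB₀sub.trans (Set.subset_iUnion (fun t => (f t : Set W)) t₀)) ?_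
    exact hBC.trans (Set.iUnion_mono fun t _ hx => hx.1)
  have inf_le_span : f t ⊓ C ≤ Submodule.span K ((B₀ ∪ B) ∩ f t) :=
    (hBspan t).trans (Submodule.span_mono fun _ hx => ⟨Or.inr hx.1, hx.2.1⟩)
  rcases hC t with ht | ht
  · rwa [inf_eq_left.mpr ht] at inf_le_span
  · calc f t = (f t₀ ⊔ C) ⊓ f t := by rw [compl.sup_eq_top, top_inf_eq]
      _ = Submodule.span K B₀ ⊔ f t ⊓ C := by rw [sup_inf_assoc_of_le C ht, hB₀span, inf_comm]
      _ ≤ Submodule.span K ((B₀ ∪ B) ∩ f t) :=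
        sup_le (Submodule.span_mono fun _ hx => ⟨Or.inl hx, ht (hB₀sub hx)⟩) inf_le_span

theorem exists_basis_forall_isAdapted (f : LatticeHom T (Submodule K W))
    (hfin : (Set.range f).Finite) :
    ∃ (B : Set W) (b : Basis B K W), ∀ t, IsAdapted b (f t) := by
  obtain ⟨B, hB, -, hBspan⟩ := exists_linearIndepOn_le_span_inter f hfin
  refine ⟨_, Basis.extend hB, fun t => ⟨{x | (x : W) ∈ f t}, le_antisymm ?_ ?_⟩⟩
  · refine (hBspan t).trans (Submodule.span_mono fun x hx => ?_)
    exact ⟨⟨x, hB.subset_extend _ hx.1⟩, hx.2, Basis.extend_apply_self hB _⟩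
  · rw [Submodule.span_le]
    rintro _ ⟨x, hx, rfl⟩
    rwa [Basis.extend_apply_self]

end AdaptedBasis

section DistributiveCollection

variable {K W W' : Type*} [Field K] [AddCommGroup W] [Module K W] [AddCommGroup W'] [Module K W']
  {S F : Set (Submodule K W)}

theorem sublatticeGen_eq_latticeClosure (S : Set (Submodule K W)) :
    sublatticeGen S = latticeClosure S := by
  apply subset_antisymm
  · exact Set.sInter_subset_of_mem ⟨subset_latticeClosure,
      fun _ ha _ hb => isSublattice_latticeClosure.infClosed ha hb,
      fun _ ha _ hb => isSublattice_latticeClosure.supClosed ha hb⟩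
  · exact Set.subset_sInter fun T ⟨hST, hinf, hsup⟩ => latticeClosure_min hST
      ⟨fun a ha b hb => hsup a ha b hb, fun a ha b hb => hinf a ha b hb⟩

@[elab_as_elim]
theorem sublatticeGen_induction {p : Submodule K W → Prop} (mem : ∀ a ∈ S, p a)
    (inf : ∀ a b, p a → p b → p (a ⊓ b)) (sup : ∀ a b, p a → p b → p (a ⊔ b))
    {a : Submodule K W} (ha : a ∈ sublatticeGen S) : p a :=
  ha {a | p a} ⟨mem, fun a ha b hb => inf a b ha hb, fun a ha b hb => sup a b ha hb⟩

theorem subset_sublatticeGen : S ⊆ sublatticeGen S :=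
  sublatticeGen_eq_latticeClosure S ▸ subset_latticeClosure

theorem isSublattice_sublatticeGen : IsSublattice (sublatticeGen S) :=
  sublatticeGen_eq_latticeClosure S ▸ isSublattice_latticeClosure

theorem sublatticeGen_mono (h : F ⊆ S) : sublatticeGen F ⊆ sublatticeGen S := by
  simpa only [sublatticeGen_eq_latticeClosure] using latticeClosure_mono h

theorem IsDistributiveCollection.mono (hS : IsDistributiveCollection S) (h : F ⊆ S) :
    IsDistributiveCollection F := fun a ha b hb c hc =>
  hS a (sublatticeGen_mono h ha) b (sublatticeGen_mono h hb) c (sublatticeGen_mono h hc)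

theorem IsDistributiveCollection.exists_basis_isAdapted (hF : IsDistributiveCollection F)
    (hfin : F.Finite) : ∃ (B : Set W) (b : Basis B K W), ∀ U ∈ F, IsAdapted b U := by
  let L : Sublattice (Submodule K W) := ⟨sublatticeGen F,
    isSublattice_sublatticeGen.supClosed, isSublattice_sublatticeGen.infClosed⟩
  let _ : DistribLattice L := DistribLattice.ofInfSupLe fun a b c =>
    le_of_eq (Subtype.ext (hF a a.2 b b.2 c c.2))
  have range_finite : (Set.range L.subtype).Finite := by
    have closure_finite : (latticeClosure (L.subtype ⁻¹' F)).Finite :=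
      (hfin.preimage L.subtype_injective.injOn).latticeClosure
    have image_closure : L.subtype '' latticeClosure (L.subtype ⁻¹' F) = sublatticeGen F := by
      rw [image_latticeClosure _ _ (map_sup L.subtype) (map_inf L.subtype),
        Set.image_preimage_eq_of_subset fun U hU => ⟨⟨U, subset_sublatticeGen hU⟩, rfl⟩,
        sublatticeGen_eq_latticeClosure]
    refine (image_closure ▸ closure_finite.image _).subset ?_
    rintro _ ⟨U, rfl⟩
    exact U.2
  obtain ⟨B, b, hb⟩ := exists_basis_forall_isAdapted L.subtype range_finite
  exact ⟨B, b, fun U hU => hb ⟨U, subset_sublatticeGen hU⟩⟩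

theorem isDistributiveCollection_of_isAdapted {ι : Type*} (b : Basis ι K W)
    (h : ∀ U ∈ S, IsAdapted b U) : IsDistributiveCollection S := by
  have adapted {U : Submodule K W} (hU : U ∈ sublatticeGen S) : IsAdapted b U :=
    sublatticeGen_induction h (fun _ _ => .inf) (fun _ _ => .sup) hU
  exact fun a ha b hb c hc => (adapted ha).inf_sup_left (adapted hb) (adapted hc)

theorem exists_finite_mem_sublatticeGen {a : Submodule K W} (ha : a ∈ sublatticeGen S) :
    ∃ F ⊆ S, F.Finite ∧ a ∈ sublatticeGen F := by
  refine sublatticeGen_induction (fun a ha => ?_) ?_ ?_ ha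
  · exact ⟨{a}, Set.singleton_subset_iff.mpr ha, Set.finite_singleton a, subset_sublatticeGen rfl⟩
  all_goals
    rintro a b ⟨F, hFS, hF, ha⟩ ⟨G, hGS, hG, hb⟩
    refine ⟨F ∪ G, Set.union_subset hFS hGS, hF.union hG, ?_⟩
    have ha' := sublatticeGen_mono (Set.subset_union_left (t := G)) ha
    have hb' := sublatticeGen_mono (Set.subset_union_right (s := F)) hb
  · exact isSublattice_sublatticeGen.infClosed ha' hb'
  · exact isSublattice_sublatticeGen.supClosed ha' hb'

theorem isDistributiveCollection_of_finite_subsets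
    (h : ∀ F ⊆ S, F.Finite → IsDistributiveCollection F) : IsDistributiveCollection S := by
  intro a ha b hb c hc
  obtain ⟨A, hAS, hA, ha⟩ := exists_finite_mem_sublatticeGen ha
  obtain ⟨B, hBS, hB, hb⟩ := exists_finite_mem_sublatticeGen hb
  obtain ⟨C, hCS, hC, hc⟩ := exists_finite_mem_sublatticeGen hc
  refine h (A ∪ B ∪ C) (by simp [*]) ((hA.union hB).union hC) a ?_ b ?_ c ?_
  · exact sublatticeGen_mono (Set.subset_union_left.trans Set.subset_union_left) ha
  · exact sublatticeGen_mono (Set.subset_union_right.trans Set.subset_union_left) hb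
  · exact sublatticeGen_mono Set.subset_union_right hc

/-- `V` restricts to `U` along a linear map `i` with left inverse `r` if both `r` and the inverse
image under `i` carry `V` to `U`. The first operation preserves sums and the second preserves
intersections, so this relation is compatible with both. -/
structure RestrictsTo (i : W →ₗ[K] W') (r : W' →ₗ[K] W) (V : Submodule K W')
    (U : Submodule K W) : Prop where
  map_eq : V.map r = U
  comap_eq : V.comap i = U

theorem comap_le_map_of_leftInverse {i : W →ₗ[K] W'} {r : W' →ₗ[K] W}
    (h : Function.LeftInverse r i) (V : Submodule K W') : V.comap i ≤ V.map r :=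
  fun x hx => ⟨i x, hx, h x⟩

namespace RestrictsTo

variable {i : W →ₗ[K] W'} {r : W' →ₗ[K] W} {V V' : Submodule K W'} {U U' : Submodule K W}

theorem inf (hri : Function.LeftInverse r i) (h : RestrictsTo i r V U)
    (h' : RestrictsTo i r V' U') : RestrictsTo i r (V ⊓ V') (U ⊓ U') := by
  have comap_eq : (V ⊓ V').comap i = U ⊓ U' := by
    rw [Submodule.comap_inf, h.comap_eq, h'.comap_eq]
  refine ⟨le_antisymm ?_ (comap_eq ▸ comap_le_map_of_leftInverse hri _), comap_eq⟩
  rw [← h.map_eq, ← h'.map_eq]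
  exact Submodule.map_inf_le r

theorem sup (hri : Function.LeftInverse r i) (h : RestrictsTo i r V U)
    (h' : RestrictsTo i r V' U') : RestrictsTo i r (V ⊔ V') (U ⊔ U') := by
  have map_eq : (V ⊔ V').map r = U ⊔ U' := by
    rw [Submodule.map_sup, h.map_eq, h'.map_eq]
  refine ⟨map_eq, le_antisymm (map_eq ▸ comap_le_map_of_leftInverse hri _) ?_⟩
  rw [← h.comap_eq, ← h'.comap_eq]
  exact sup_le (Submodule.comap_mono le_sup_left) (Submodule.comap_mono le_sup_right)

end RestrictsTo

theorem IsDistributiveCollection.of_restrictsTo {S' : Set (Submodule K W')}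
    {i : W →ₗ[K] W'} {r : W' →ₗ[K] W} (hri : Function.LeftInverse r i)
    (h : ∀ U ∈ S, ∃ V ∈ S', RestrictsTo i r V U) (hS' : IsDistributiveCollection S') :
    IsDistributiveCollection S := by
  have lift {U : Submodule K W} (hU : U ∈ sublatticeGen S) :
      ∃ V ∈ sublatticeGen S', RestrictsTo i r V U := by
    refine sublatticeGen_induction ?_ ?_ ?_ hU
    · exact fun U hU => (h U hU).imp fun V hV => ⟨subset_sublatticeGen hV.1, hV.2⟩
    · rintro _ _ ⟨V, hV, hVU⟩ ⟨V', hV', hVU'⟩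
      exact ⟨V ⊓ V', isSublattice_sublatticeGen.infClosed hV hV', hVU.inf hri hVU'⟩
    · rintro _ _ ⟨V, hV, hVU⟩ ⟨V', hV', hVU'⟩
      exact ⟨V ⊔ V', isSublattice_sublatticeGen.supClosed hV hV', hVU.sup hri hVU'⟩
  intro a ha b hb c hc
  obtain ⟨a', ha', haa⟩ := lift ha
  obtain ⟨b', hb', hbb⟩ := lift hb
  obtain ⟨c', hc', hcc⟩ := lift hc
  rw [← (haa.inf hri (hbb.sup hri hcc)).map_eq, hS' a' ha' b' hb' c' hc',
    ((haa.inf hri hbb).sup hri (haa.inf hri hcc)).map_eq]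

end DistributiveCollection

section TwoSidedSubspace

variable {K A B : Type*} [Field K] [Ring A] [Algebra K A] [Ring B] [Algebra K B]

/-- Two-sided ideals of a `K`-algebra, encoded as subspaces absorbed by the top subspace under
multiplication of subspaces on either side. -/
structure IsTwoSidedSubspace (U : Submodule K A) : Prop where
  top_mul : ⊤ * U = U
  mul_top : U * ⊤ = U

theorem subspace_top_mul_top : (⊤ : Submodule K A) * ⊤ = ⊤ :=
  top_le_iff.mp (le_mul_of_one_le_left' le_top)

theorem isTwoSidedSubspace_top : IsTwoSidedSubspace (⊤ : Submodule K A) :=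
  ⟨subspace_top_mul_top, subspace_top_mul_top⟩

theorem isTwoSidedSubspace_top_mul_mul_top (U : Submodule K A) :
    IsTwoSidedSubspace (⊤ * U * ⊤) where
  top_mul := by rw [← mul_assoc, ← mul_assoc, subspace_top_mul_top]
  mul_top := by rw [mul_assoc _ ⊤ ⊤, subspace_top_mul_top]

theorem twoSidedSpan_eq_top_mul_span_mul_top (S : Set A) :
    twoSidedSpan K S = ⊤ * Submodule.span K S * ⊤ := by
  rw [← Submodule.span_univ, Submodule.span_mul_span, Submodule.span_mul_span, twoSidedSpan]
  congr 1
  ext z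
  simp [Set.mem_mul, eq_comm]

theorem isTwoSidedSubspace_twoSidedSpan (S : Set A) : IsTwoSidedSubspace (twoSidedSpan K S) :=
  twoSidedSpan_eq_top_mul_span_mul_top (K := K) S ▸ isTwoSidedSubspace_top_mul_mul_top _

namespace IsTwoSidedSubspace

variable {U V : Submodule K A}

theorem mul (hU : IsTwoSidedSubspace U) (hV : IsTwoSidedSubspace V) :
    IsTwoSidedSubspace (U * V) where
  top_mul := by rw [← mul_assoc, hU.top_mul]
  mul_top := by rw [mul_assoc, hV.mul_top]

theorem latticePow_succ (hU : IsTwoSidedSubspace U) (k : ℕ) :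
    latticePow U (k + 1) = latticePow U k * U := by
  cases k with
  | zero => rw [latticePow, latticePow, pow_one, hU.top_mul]
  | succ k => rw [latticePow, latticePow, pow_succ]

theorem latticePow_succ' (hU : IsTwoSidedSubspace U) (k : ℕ) :
    latticePow U (k + 1) = U * latticePow U k := by
  cases k with
  | zero => rw [latticePow, latticePow, pow_one, hU.mul_top]
  | succ k => rw [latticePow, latticePow, pow_succ']

theorem latticePow (hU : IsTwoSidedSubspace U) (k : ℕ) : IsTwoSidedSubspace (latticePow U k) := by
  induction k with
  | zero => exact isTwoSidedSubspace_top
  | succ k ih => exact hU.latticePow_succ k ▸ ih.mul hU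

end IsTwoSidedSubspace

namespace RestrictsTo

variable {i : A →ₐ[K] B} {r : B →ₐ[K] A} {V V' : Submodule K B} {U U' : Submodule K A}

theorem of_map_le (hri : Function.LeftInverse r i) (hmap : V.map r.toLinearMap = U)
    (hle : U.map i.toLinearMap ≤ V) : RestrictsTo i.toLinearMap r.toLinearMap V U :=
  ⟨hmap, le_antisymm (hmap ▸ comap_le_map_of_leftInverse hri V)
    (Submodule.map_le_iff_le_comap.mp hle)⟩

theorem mul (hri : Function.LeftInverse r i) (h : RestrictsTo i.toLinearMap r.toLinearMap V U)
    (h' : RestrictsTo i.toLinearMap r.toLinearMap V' U') :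
    RestrictsTo i.toLinearMap r.toLinearMap (V * V') (U * U') := by
  refine of_map_le hri (by rw [Submodule.map_mul, h.map_eq, h'.map_eq]) ?_
  rw [Submodule.map_mul]
  exact mul_le_mul' (Submodule.map_le_iff_le_comap.mpr h.comap_eq.ge)
    (Submodule.map_le_iff_le_comap.mpr h'.comap_eq.ge)

theorem map_self (hri : Function.LeftInverse r i) (U : Submodule K A) :
    RestrictsTo i.toLinearMap r.toLinearMap (U.map i.toLinearMap) U := by
  refine of_map_le hri ?_ le_rfl
  have comp_eq_id : r.toLinearMap ∘ₗ i.toLinearMap = LinearMap.id := LinearMap.ext hri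
  rw [← Submodule.map_comp, comp_eq_id, Submodule.map_id]

theorem top (hri : Function.LeftInverse r i) :
    RestrictsTo i.toLinearMap r.toLinearMap (⊤ : Submodule K B) ⊤ :=
  of_map_le hri (top_le_iff.mp fun x _ => ⟨i x, trivial, hri x⟩) le_top

theorem latticePow (hri : Function.LeftInverse r i)
    (h : RestrictsTo i.toLinearMap r.toLinearMap V U) (hV : IsTwoSidedSubspace V)
    (hU : IsTwoSidedSubspace U) (k : ℕ) :
    RestrictsTo i.toLinearMap r.toLinearMap (latticePow V k) (latticePow U k) := by
  induction k with
  | zero => exact top hri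
  | succ k ih => exact hV.latticePow_succ k ▸ hU.latticePow_succ k ▸ mul hri ih h

end RestrictsTo

end TwoSidedSubspace

section FreeAlgebra

variable {K X : Type*} [Field K] {s : ℕ}

/-- The span of the generators of a free algebra. -/
def letters (K X : Type*) [Field K] : Submodule K (FreeAlgebra K X) :=
  Submodule.span K (Set.range (FreeAlgebra.ι K))

theorem ι_mem_letters (i : X) : FreeAlgebra.ι K i ∈ letters K X :=
  Submodule.subset_span ⟨i, rfl⟩

theorem eq_top_of_letters_mul_le {U : Submodule K (FreeAlgebra K X)} (one_mem : 1 ∈ U)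
    (h : letters K X * U ≤ U) : U = ⊤ := by
  have mul_mem (a : FreeAlgebra K X) : ∀ u ∈ U, a * u ∈ U := by
    induction a with
    | grade0 r => exact fun u hu => (Algebra.smul_def r u) ▸ U.smul_mem r hu
    | grade1 i => exact fun u hu => h (Submodule.mul_mem_mul (ι_mem_letters i) hu)
    | mul a b ha hb => exact fun u hu => mul_assoc a b u ▸ ha _ (hb u hu)
    | add a b ha hb => exact fun u hu => add_mul a b u ▸ U.add_mem (ha u hu) (hb u hu)
  exact top_le_iff.mp fun a _ => mul_one a ▸ mul_mem a 1 one_mem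

theorem iSup_letters_pow : ⨆ d, letters K X ^ d = ⊤ := by
  apply eq_top_of_letters_mul_le
  · exact Submodule.mem_iSup_of_mem 0 (by simp)
  · simp only [Submodule.mul_iSup, ← pow_succ']
    exact iSup_le fun d => le_iSup (letters K X ^ ·) (d + 1)

theorem augIdeal_eq_letters_mul_top : augIdeal K s = letters K (Fin s) * ⊤ := by
  rw [← iSup_letters_pow, Submodule.mul_iSup]
  exact iSup_congr fun d => pow_succ' _ d

theorem augIdeal_eq_top_mul_letters : augIdeal K s = ⊤ * letters K (Fin s) := by
  rw [← iSup_letters_pow, Submodule.iSup_mul]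
  exact iSup_congr fun d => pow_succ _ d

theorem isTwoSidedSubspace_augIdeal : IsTwoSidedSubspace (augIdeal K s) where
  top_mul := by rw [augIdeal_eq_top_mul_letters, ← mul_assoc, subspace_top_mul_top]
  mul_top := by rw [augIdeal_eq_letters_mul_top, mul_assoc, subspace_top_mul_top]

theorem basisFreeMonoid_mul (v w : FreeMonoid X) :
    FreeAlgebra.basisFreeMonoid K X (v * w) =
      FreeAlgebra.basisFreeMonoid K X v * FreeAlgebra.basisFreeMonoid K X w := by
  simp [FreeAlgebra.basisFreeMonoid, FreeAlgebra.equivMonoidAlgebraFreeMonoid]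

theorem basisFreeMonoid_of (i : X) :
    FreeAlgebra.basisFreeMonoid K X (FreeMonoid.of i) = FreeAlgebra.ι K i := by
  simp [FreeAlgebra.basisFreeMonoid, FreeAlgebra.equivMonoidAlgebraFreeMonoid]

/-- A subspace of the free algebra is monomial if it is spanned by words. -/
def IsMonomial (U : Submodule K (FreeAlgebra K X)) : Prop :=
  IsAdapted (FreeAlgebra.basisFreeMonoid K X) U

theorem IsMonomial.mul {U V : Submodule K (FreeAlgebra K X)} (hU : IsMonomial U)
    (hV : IsMonomial V) : IsMonomial (U * V) := by
  obtain ⟨I, rfl⟩ := hU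
  obtain ⟨J, rfl⟩ := hV
  refine ⟨Set.image2 (· * ·) I J, ?_⟩
  rw [Submodule.span_mul_span, ← Set.image2_mul, Set.image2_image_left, Set.image2_image_right,
    Set.image_image2]
  simp only [basisFreeMonoid_mul]

theorem IsDistributiveCollection.exists_linearEquiv_isMonomial
    {F : Set (Submodule K (FreeAlgebra K X))} (hF : IsDistributiveCollection F)
    (hfin : F.Finite) :
    ∃ e : FreeAlgebra K X ≃ₗ[K] FreeAlgebra K X,
      ∀ U ∈ F, IsMonomial (U.map e.toLinearMap) := by
  obtain ⟨B, b, hb⟩ := hF.exists_basis_isAdapted hfin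
  let words := FreeAlgebra.basisFreeMonoid K X
  let e := b.equiv words (b.indexEquiv words)
  have map_eq_words : (b.reindex (b.indexEquiv words)).map e = words := by
    ext w
    simp [e]
  refine ⟨e, fun U hU => ?_⟩
  have adapted := ((hb U hU).reindex (b.indexEquiv words)).map e
  rwa [map_eq_words] at adapted

end FreeAlgebra

section FreeExtension

variable {K : Type*} [Field K] {m n : ℕ}

/-- The inclusion `K⟨t₁,…,tₘ⟩ → K⟨t₁,…,tₘ,x₁,…,xₙ⟩` of free algebras. -/
def freeInclusion (K : Type*) [Field K] (m n : ℕ) :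
    FreeAlgebra K (Fin m) →ₐ[K] FreeAlgebra K (Fin (m + n)) :=
  FreeAlgebra.lift K fun k => FreeAlgebra.ι K (Fin.castAdd n k)

/-- The retraction `K⟨t₁,…,tₘ,x₁,…,xₙ⟩ → K⟨t₁,…,tₘ⟩` that sends every `xⱼ` to `0`. -/
def freeRetraction (K : Type*) [Field K] (m n : ℕ) :
    FreeAlgebra K (Fin (m + n)) →ₐ[K] FreeAlgebra K (Fin m) :=
  FreeAlgebra.lift K (Fin.addCases (FreeAlgebra.ι K) 0)

/-- The image in `K⟨t₁,…,tₘ,x₁,…,xₙ⟩` of a subspace of `K⟨t₁,…,tₘ⟩`. -/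
def incl (n : ℕ) (U : Submodule K (FreeAlgebra K (Fin m))) :
    Submodule K (FreeAlgebra K (Fin (m + n))) :=
  U.map (freeInclusion K m n).toLinearMap

/-- The span of the letters `x₁,…,xₙ` in `K⟨t₁,…,tₘ,x₁,…,xₙ⟩`. -/
def newLetters (K : Type*) [Field K] (m n : ℕ) : Submodule K (FreeAlgebra K (Fin (m + n))) :=
  Submodule.span K (Set.range fun j => FreeAlgebra.ι K (Fin.natAdd m j))

theorem freeInclusion_ι (k : Fin m) :
    freeInclusion K m n (FreeAlgebra.ι K k) = FreeAlgebra.ι K (Fin.castAdd n k) :=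
  FreeAlgebra.lift_ι_apply _ _

theorem freeRetraction_leftInverse :
    Function.LeftInverse (freeRetraction K m n) (freeInclusion K m n) := by
  have comp_eq_id : (freeRetraction K m n).comp (freeInclusion K m n) = AlgHom.id K _ := by
    ext k
    simp [freeRetraction, freeInclusion]
  exact DFunLike.congr_fun comp_eq_id

theorem incl_mul_incl (U V : Submodule K (FreeAlgebra K (Fin m))) :
    incl n U * incl n V = incl n (U * V) :=
  (Submodule.map_mul U V _).symm

theorem incl_mono {U V : Submodule K (FreeAlgebra K (Fin m))} (h : U ≤ V) : incl n U ≤ incl n V :=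
  Submodule.map_mono h

theorem one_le_incl_top : 1 ≤ incl n (⊤ : Submodule K (FreeAlgebra K (Fin m))) :=
  Submodule.one_le.mpr ⟨1, trivial, map_one (freeInclusion K m n)⟩

theorem letters_eq_incl_sup_newLetters :
    letters K (Fin (m + n)) = incl n (letters K (Fin m)) ⊔ newLetters K m n := by
  rw [incl, letters, letters, newLetters, Submodule.map_span, ← Submodule.span_union]
  congr 1
  rw [← Set.range_comp]
  refine subset_antisymm (Set.range_subset_iff.mpr fun i => ?_) (Set.union_subset ?_ ?_)
  · cases i using Fin.addCases with
    | left k => exact Or.inl ⟨k, freeInclusion_ι k⟩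
    | right j => exact Or.inr ⟨j, rfl⟩
  · exact Set.range_subset_iff.mpr fun k => ⟨Fin.castAdd n k, (freeInclusion_ι k).symm⟩
  · exact Set.range_subset_iff.mpr fun j => ⟨Fin.natAdd m j, rfl⟩

theorem twoSidedSpan_freeInclusion_image (I : Submodule K (FreeAlgebra K (Fin m))) :
    twoSidedSpan K (freeInclusion K m n '' I) = ⊤ * incl n I * ⊤ := by
  rw [twoSidedSpan_eq_top_mul_span_mul_top, incl, ← Submodule.span_eq I, Submodule.map_span,
    Submodule.span_eq]
  rfl

theorem incl_mul_newLetters_mul_le {U : Submodule K (FreeAlgebra K (Fin m))}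
    {V P : Submodule K (FreeAlgebra K (Fin (m + n)))}
    (h : ∀ a ∈ U, ∀ x ∈ newLetters K m n, ∀ l ∈ V, freeInclusion K m n a * x * l ∈ P) :
    incl n U * newLetters K m n * V ≤ P := by
  rw [mul_assoc, Submodule.mul_le]
  rintro _ ⟨a, ha, rfl⟩ y hy
  induction hy using Submodule.mul_induction_on' with
  | mem_mul_mem x hx l hl => exact (mul_assoc _ x l) ▸ h a ha x hx l hl
  | add y _ z _ ihy ihz => exact (mul_add _ y z) ▸ P.add_mem ihy ihz

theorem iSup_incl_top_mul_newLetters_mul_pow :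
    ⨆ k, incl n (⊤ : Submodule K (FreeAlgebra K (Fin m))) *
      (newLetters K m n * incl n ⊤) ^ k = ⊤ := by
  apply eq_top_of_letters_mul_le
  · exact Submodule.mem_iSup_of_mem 0 (by simpa using Submodule.one_le.mp one_le_incl_top)
  rw [letters_eq_incl_sup_newLetters, Submodule.sup_mul, Submodule.mul_iSup, Submodule.mul_iSup]
  refine sup_le (iSup_le fun k => le_iSup_of_le k ?_) (iSup_le fun k => le_iSup_of_le (k + 1) ?_)
  · rw [← mul_assoc, incl_mul_incl]
    exact mul_le_mul_left (incl_mono le_top) _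
  · rw [pow_succ', ← mul_assoc]
    exact le_mul_of_one_le_left' one_le_incl_top

theorem eq_top_of_incl_top_mul_newLetters_mul_le {P : Submodule K (FreeAlgebra K (Fin (m + n)))}
    (incl_le : incl n ⊤ ≤ P) (mul_le : incl n ⊤ * newLetters K m n * P ≤ P) : P = ⊤ := by
  rw [← top_le_iff, ← iSup_incl_top_mul_newLetters_mul_pow]
  refine iSup_le fun k => ?_
  induction k with
  | zero => simpa using incl_le
  | succ k ih =>
    rw [pow_succ', mul_assoc (newLetters K m n), ← mul_assoc]
    exact (mul_le_mul_right ih _).trans mul_le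

/-- A sum of subspaces `U₀XU₁X⋯XU_k` of `K⟨t₁,…,tₘ,x₁,…,xₙ⟩`, where `X` is the span of the `xⱼ` and
the slots `Uᵢ` are subspaces of `K⟨t₁,…,tₘ⟩` taken from `S`. -/
inductive IsInterlaced (n : ℕ) (S : Set (Submodule K (FreeAlgebra K (Fin m)))) :
    Submodule K (FreeAlgebra K (Fin (m + n))) → Prop
  | of_mem {U} (hU : U ∈ S) : IsInterlaced n S (incl n U)
  | cons {U V} (hU : U ∈ S) (hV : IsInterlaced n S V) :
      IsInterlaced n S (incl n U * newLetters K m n * V)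
  | iSup {κ : Type} {V : κ → Submodule K (FreeAlgebra K (Fin (m + n)))}
      (hV : ∀ k, IsInterlaced n S (V k)) : IsInterlaced n S (⨆ k, V k)

namespace IsInterlaced

variable {S T : Set (Submodule K (FreeAlgebra K (Fin m)))} {W : Submodule K (FreeAlgebra K (Fin m))}
  {V V' : Submodule K (FreeAlgebra K (Fin (m + n)))}

theorem sup (hV : IsInterlaced n S V) (hV' : IsInterlaced n S V') :
    IsInterlaced n S (V ⊔ V') := by
  rw [sup_eq_iSup]
  exact iSup (Bool.rec hV' hV)

theorem mono (hST : S ⊆ T) (hV : IsInterlaced n S V) : IsInterlaced n T V := by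
  induction hV with
  | of_mem hU => exact of_mem (hST hU)
  | cons hU _ ih => exact cons (hST hU) ih
  | iSup _ ih => exact iSup ih

theorem mul_incl (hST : S ⊆ T) (hW : ∀ U ∈ S, U * W ∈ T) (hV : IsInterlaced n S V) :
    IsInterlaced n T (V * incl n W) := by
  induction hV with
  | of_mem hU => exact incl_mul_incl (n := n) _ W ▸ of_mem (hW _ hU)
  | cons hU _ ih => simpa only [mul_assoc] using cons (hST hU) ih
  | iSup _ ih => simpa only [Submodule.iSup_mul] using iSup ih

theorem incl_mul (hW : ∀ U ∈ S, W * U ∈ T) (hST : S ⊆ T) (hV : IsInterlaced n S V) :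
    IsInterlaced n T (incl n W * V) := by
  induction hV with
  | of_mem hU => exact incl_mul_incl (n := n) W _ ▸ of_mem (hW _ hU)
  | cons hU hV =>
    rw [← mul_assoc, ← mul_assoc, incl_mul_incl]
    exact cons (hW _ hU) (hV.mono hST)
  | iSup _ ih => simpa only [Submodule.mul_iSup] using iSup ih

theorem mul_newLetters (hW : W ∈ S) (hV : IsInterlaced n S V) :
    IsInterlaced n S (V * newLetters K m n * incl n W) := by
  induction hV with
  | of_mem hU => exact cons hU (of_mem hW)
  | cons hU _ ih => simpa only [mul_assoc] using cons hU ih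
  | iSup _ ih => simpa only [Submodule.iSup_mul] using iSup ih

theorem mul_top (htop : ⊤ ∈ S) (hS : ∀ U ∈ S, U * ⊤ ∈ S) (hV : IsInterlaced n S V) :
    IsInterlaced n S (V * ⊤) := by
  rw [← iSup_incl_top_mul_newLetters_mul_pow, Submodule.mul_iSup]
  refine iSup fun k => ?_
  induction k with
  | zero => simpa only [pow_zero, mul_one] using hV.mul_incl subset_rfl hS
  | succ k ih => simpa only [pow_succ, mul_assoc] using ih.mul_newLetters htop

end IsInterlaced

/-- Subspaces interlaced over a finite part of `G`. The sum itself may be infinite, but only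
finitely many slots occur in it. -/
def IsFinitelyInterlaced (n : ℕ) (G : Set (Submodule K (FreeAlgebra K (Fin m))))
    (V : Submodule K (FreeAlgebra K (Fin (m + n)))) : Prop :=
  ∃ F ⊆ G, F.Finite ∧ IsInterlaced n F V

namespace IsFinitelyInterlaced

variable {G H : Set (Submodule K (FreeAlgebra K (Fin m)))} {W : Submodule K (FreeAlgebra K (Fin m))}
  {V V' : Submodule K (FreeAlgebra K (Fin (m + n)))}

theorem of_mem (hW : W ∈ G) : IsFinitelyInterlaced n G (incl n W) :=
  ⟨{W}, Set.singleton_subset_iff.mpr hW, Set.finite_singleton W, .of_mem rfl⟩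

theorem mono (hGH : G ⊆ H) : IsFinitelyInterlaced n G V → IsFinitelyInterlaced n H V :=
  fun ⟨F, hFG, hF, hV⟩ => ⟨F, hFG.trans hGH, hF, hV⟩

theorem cons (hW : W ∈ G) :
    IsFinitelyInterlaced n G V → IsFinitelyInterlaced n G (incl n W * newLetters K m n * V) :=
  fun ⟨F, hFG, hF, hV⟩ => ⟨insert W F, Set.insert_subset hW hFG, hF.insert W,
    .cons (Set.mem_insert W F) (hV.mono (Set.subset_insert W F))⟩

theorem sup : IsFinitelyInterlaced n G V → IsFinitelyInterlaced n G V' →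
    IsFinitelyInterlaced n G (V ⊔ V') :=
  fun ⟨F, hFG, hF, hV⟩ ⟨F', hFG', hF', hV'⟩ => ⟨F ∪ F', Set.union_subset hFG hFG', hF.union hF',
    (hV.mono Set.subset_union_left).sup (hV'.mono Set.subset_union_right)⟩

theorem mul_incl (hW : ∀ U ∈ G, U * W ∈ G) :
    IsFinitelyInterlaced n G V → IsFinitelyInterlaced n G (V * incl n W) :=
  fun ⟨F, hFG, hF, hV⟩ => ⟨F ∪ (· * W) '' F,
    Set.union_subset hFG (Set.image_subset_iff.mpr fun U hU => hW U (hFG hU)),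
    hF.union (hF.image _),
    hV.mul_incl Set.subset_union_left fun _ hU => Or.inr (Set.mem_image_of_mem _ hU)⟩

theorem incl_mul (hW : ∀ U ∈ G, W * U ∈ G) :
    IsFinitelyInterlaced n G V → IsFinitelyInterlaced n G (incl n W * V) :=
  fun ⟨F, hFG, hF, hV⟩ => ⟨F ∪ (W * ·) '' F,
    Set.union_subset hFG (Set.image_subset_iff.mpr fun U hU => hW U (hFG hU)),
    hF.union (hF.image _),
    hV.incl_mul (fun _ hU => Or.inr (Set.mem_image_of_mem _ hU)) Set.subset_union_left⟩

theorem mul_newLetters (hW : W ∈ G) : IsFinitelyInterlaced n G V →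
    IsFinitelyInterlaced n G (V * newLetters K m n * incl n W) :=
  fun ⟨F, hFG, hF, hV⟩ => ⟨insert W F, Set.insert_subset hW hFG, hF.insert W,
    (hV.mono (Set.subset_insert W F)).mul_newLetters (Set.mem_insert W F)⟩

theorem mul_top (htop : ⊤ ∈ G) (hG : ∀ U ∈ G, U * ⊤ = U) :
    IsFinitelyInterlaced n G V → IsFinitelyInterlaced n G (V * ⊤) := by
  rintro ⟨F, hFG, hF, hV⟩
  have insert_subset : insert ⊤ F ⊆ G := Set.insert_subset htop hFG
  refine ⟨insert ⊤ F, insert_subset, hF.insert ⊤,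
    (hV.mono (Set.subset_insert ⊤ F)).mul_top (Set.mem_insert ⊤ F) fun U hU => ?_⟩
  rwa [hG U (insert_subset hU)]

theorem top (htop : ⊤ ∈ G) (hG : ∀ U ∈ G, U * ⊤ = U) :
    IsFinitelyInterlaced n G (⊤ : Submodule K (FreeAlgebra K (Fin (m + n)))) := by
  have incl_top_mul_top : incl n (⊤ : Submodule K (FreeAlgebra K (Fin m))) * ⊤ = ⊤ :=
    top_le_iff.mp (le_mul_of_one_le_left' one_le_incl_top)
  exact incl_top_mul_top ▸ (of_mem htop).mul_top htop hG

end IsFinitelyInterlaced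

theorem incl_augIdeal_le : incl n (augIdeal K m) ≤ augIdeal K (m + n) := by
  rw [augIdeal_eq_letters_mul_top, augIdeal_eq_letters_mul_top, ← incl_mul_incl,
    letters_eq_incl_sup_newLetters]
  exact mul_le_mul' le_sup_left le_top

theorem incl_letters_le_incl_augIdeal : incl n (letters K (Fin m)) ≤ incl n (augIdeal K m) := by
  rw [augIdeal_eq_letters_mul_top]
  exact incl_mono (le_mul_of_one_le_right' le_top)

theorem augIdeal_mul_eq_sup {V : Submodule K (FreeAlgebra K (Fin (m + n)))} (hV : ⊤ * V = V) :
    augIdeal K (m + n) * V = incl n (augIdeal K m) * V ⊔ incl n ⊤ * newLetters K m n * V := by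
  apply le_antisymm
  · rw [augIdeal_eq_letters_mul_top, mul_assoc, hV, letters_eq_incl_sup_newLetters,
      Submodule.sup_mul]
    gcongr
    · exact incl_letters_le_incl_augIdeal
    · exact le_mul_of_one_le_left' one_le_incl_top
  · refine sup_le ?_ ?_ <;> gcongr
    · exact incl_augIdeal_le
    · rw [augIdeal_eq_top_mul_letters, letters_eq_incl_sup_newLetters]
      exact mul_le_mul' le_top le_sup_right

theorem mul_augIdeal_eq_sup {V : Submodule K (FreeAlgebra K (Fin (m + n)))} (hV : V * ⊤ = V) :
    V * augIdeal K (m + n) = V * incl n (augIdeal K m) ⊔ V * newLetters K m n * incl n ⊤ := by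
  apply le_antisymm
  · rw [augIdeal_eq_top_mul_letters, ← mul_assoc, hV, letters_eq_incl_sup_newLetters,
      Submodule.mul_sup]
    refine sup_le_sup (mul_le_mul_right incl_letters_le_incl_augIdeal V) ?_
    exact le_mul_of_one_le_right' one_le_incl_top
  · rw [mul_assoc]
    refine sup_le ?_ ?_ <;> gcongr
    · exact incl_augIdeal_le
    · rw [augIdeal_eq_letters_mul_top, letters_eq_incl_sup_newLetters]
      exact mul_le_mul' le_sup_right le_top

variable {I U : Submodule K (FreeAlgebra K (Fin m))}

theorem isFinitelyInterlaced_latticePow (hI : IsTwoSidedSubspace I) (k : ℕ) :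
    IsFinitelyInterlaced n (Set.range (latticePow I)) (latticePow (⊤ * incl n I * ⊤) k) := by
  have hJ : IsTwoSidedSubspace (⊤ * incl n I * ⊤) := isTwoSidedSubspace_top_mul_mul_top _
  have htop : ⊤ ∈ Set.range (latticePow I) := ⟨0, rfl⟩
  have range_mul_top : ∀ U ∈ Set.range (latticePow I), U * ⊤ = U :=
    Set.forall_mem_range.mpr fun k => (hI.latticePow k).mul_top
  induction k with
  | zero => exact .top htop range_mul_top
  | succ k ih =>
    rw [hJ.latticePow_succ, ← mul_assoc, ← mul_assoc, (hJ.latticePow k).mul_top]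
    refine (ih.mul_incl ?_).mul_top htop range_mul_top
    exact Set.forall_mem_range.mpr fun k => ⟨k + 1, hI.latticePow_succ k⟩

theorem range_latticePow_subset_omegaGens (hI : IsTwoSidedSubspace I) :
    Set.range (latticePow I) ⊆ omegaGens K m I := by
  rintro _ ⟨mu, rfl⟩
  refine ⟨0, mu, 0, ?_⟩
  rw [latticePow, (hI.latticePow mu).top_mul, (hI.latticePow mu).mul_top]

theorem augIdeal_mul_mem_omegaGens (hU : U ∈ omegaGens K m I) :
    augIdeal K m * U ∈ omegaGens K m I := by
  obtain ⟨lam, mu, nu, rfl⟩ := hU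
  exact ⟨lam + 1, mu, nu, by simp only [isTwoSidedSubspace_augIdeal.latticePow_succ', mul_assoc]⟩

theorem mul_augIdeal_mem_omegaGens (hU : U ∈ omegaGens K m I) :
    U * augIdeal K m ∈ omegaGens K m I := by
  obtain ⟨lam, mu, nu, rfl⟩ := hU
  exact ⟨lam, mu, nu + 1, by simp only [isTwoSidedSubspace_augIdeal.latticePow_succ, mul_assoc]⟩

theorem isFinitelyInterlaced_of_mem_omegaGens (hI : IsTwoSidedSubspace I)
    {V : Submodule K (FreeAlgebra K (Fin (m + n)))}
    (hV : V ∈ omegaGens K (m + n) (⊤ * incl n I * ⊤)) :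
    IsFinitelyInterlaced n (omegaGens K m I) V := by
  have aug := isTwoSidedSubspace_augIdeal (K := K) (s := m + n)
  have hJ : IsTwoSidedSubspace (⊤ * incl n I * ⊤) := isTwoSidedSubspace_top_mul_mul_top _
  have htop : ⊤ ∈ omegaGens K m I := range_latticePow_subset_omegaGens hI ⟨0, rfl⟩
  obtain ⟨lam, mu, nu, rfl⟩ := hV
  induction nu with
  | succ nu ih =>
    have absorb := ((aug.latticePow lam).mul (hJ.latticePow mu)).mul (aug.latticePow nu)
    rw [aug.latticePow_succ, ← mul_assoc, mul_augIdeal_eq_sup absorb.mul_top]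
    exact (ih.mul_incl fun _ => mul_augIdeal_mem_omegaGens).sup (ih.mul_newLetters htop)
  | zero =>
    rw [latticePow, ((aug.latticePow lam).mul (hJ.latticePow mu)).mul_top]
    induction lam with
    | succ lam ih =>
      have absorb := (aug.latticePow lam).mul (hJ.latticePow mu)
      rw [aug.latticePow_succ', mul_assoc, augIdeal_mul_eq_sup absorb.top_mul]
      exact (ih.incl_mul fun _ => augIdeal_mul_mem_omegaGens).sup (ih.cons htop)
    | zero =>
      rw [latticePow, (hJ.latticePow mu).top_mul]
      exact (isFinitelyInterlaced_latticePow hI mu).mono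
        (range_latticePow_subset_omegaGens hI)

/-- The action of `K⟨t₁,…,tₘ,x₁,…,xₙ⟩` on linear maps out of `K⟨t₁,…,tₘ⟩` that defines the
slotwise extension `E` of `e`. If `h a = E (a * l)`, then the letter `tₖ` turns `h` into
`a ↦ E (a * tₖ * l)` and the letter `xⱼ` turns it into `a ↦ e a * xⱼ * E l`. -/
def slotwiseAction (n : ℕ) (e : FreeAlgebra K (Fin m) →ₗ[K] FreeAlgebra K (Fin m)) :
    FreeAlgebra K (Fin (m + n)) →ₐ[K]
      Module.End K (FreeAlgebra K (Fin m) →ₗ[K] FreeAlgebra K (Fin (m + n))) :=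
  FreeAlgebra.lift K <| Fin.addCases
    (fun k => LinearMap.lcomp K _ (LinearMap.mulRight K (FreeAlgebra.ι K k)))
    (fun j => LinearMap.lcomp K _ ((freeInclusion K m n).toLinearMap ∘ₗ e) ∘ₗ
      (LinearMap.mul K _).flip ∘ₗ LinearMap.mulLeft K (FreeAlgebra.ι K (Fin.natAdd m j)) ∘ₗ
        LinearMap.applyₗ 1)

/-- The linear endomorphism of `K⟨t₁,…,tₘ,x₁,…,xₙ⟩` that applies the endomorphism `e` of
`K⟨t₁,…,tₘ⟩` to every factor `aᵢ` of a product `a₀x_{j₁}a₁⋯x_{jₖ}aₖ`. -/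
def slotwise (n : ℕ) (e : FreeAlgebra K (Fin m) →ₗ[K] FreeAlgebra K (Fin m)) :
    FreeAlgebra K (Fin (m + n)) →ₗ[K] FreeAlgebra K (Fin (m + n)) :=
  LinearMap.applyₗ 1 ∘ₗ LinearMap.applyₗ ((freeInclusion K m n).toLinearMap ∘ₗ e) ∘ₗ
    (slotwiseAction n e).toLinearMap

section Slotwise

variable (e f : FreeAlgebra K (Fin m) →ₗ[K] FreeAlgebra K (Fin m))

theorem slotwiseAction_freeInclusion (a : FreeAlgebra K (Fin m)) :
    ∀ (h : FreeAlgebra K (Fin m) →ₗ[K] FreeAlgebra K (Fin (m + n))) (b : FreeAlgebra K (Fin m)),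
      slotwiseAction n e (freeInclusion K m n a) h b = h (b * a) := by
  induction a with
  | grade0 r => simp [Algebra.algebraMap_eq_smul_one]
  | grade1 k => simp [freeInclusion_ι, slotwiseAction]
  | mul a a' ha ha' => simp [ha, ha', mul_assoc]
  | add a a' ha ha' => simp [ha, ha', mul_add]

theorem slotwiseAction_newLetter (j : Fin n)
    (h : FreeAlgebra K (Fin m) →ₗ[K] FreeAlgebra K (Fin (m + n))) (b : FreeAlgebra K (Fin m)) :
    slotwiseAction n e (FreeAlgebra.ι K (Fin.natAdd m j)) h b =
      freeInclusion K m n (e b) * FreeAlgebra.ι K (Fin.natAdd m j) * h 1 := by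
  simp [slotwiseAction, mul_assoc]

theorem slotwise_freeInclusion (a : FreeAlgebra K (Fin m)) :
    slotwise n e (freeInclusion K m n a) = freeInclusion K m n (e a) := by
  simp [slotwise, slotwiseAction_freeInclusion]

theorem slotwise_freeInclusion_mul_mul (a : FreeAlgebra K (Fin m))
    {x : FreeAlgebra K (Fin (m + n))} (hx : x ∈ newLetters K m n)
    (l : FreeAlgebra K (Fin (m + n))) :
    slotwise n e (freeInclusion K m n a * x * l) =
      freeInclusion K m n (e a) * x * slotwise n e l := by
  induction hx using Submodule.span_induction with
  | mem x hx =>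
    obtain ⟨j, rfl⟩ := hx
    simp [slotwise, slotwiseAction_freeInclusion, slotwiseAction_newLetter]
  | zero => simp
  | add x y _ _ ihx ihy => simp only [mul_add, add_mul, map_add, ihx, ihy]
  | smul c x _ ihx => simp only [mul_smul_comm, smul_mul_assoc, map_smul, ihx]

variable {e f} in
theorem slotwise_leftInverse (h : Function.LeftInverse f e) :
    Function.LeftInverse (slotwise n f) (slotwise n e) := by
  have eqLocus_eq_top :
      LinearMap.eqLocus (slotwise n f ∘ₗ slotwise n e) LinearMap.id = ⊤ := by
    apply eq_top_of_incl_top_mul_newLetters_mul_le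
    · rintro _ ⟨a, -, rfl⟩
      simp [slotwise_freeInclusion, h a]
    · refine incl_mul_newLetters_mul_le fun a _ x hx l hl => ?_
      have hl : slotwise n f (slotwise n e l) = l := hl
      simp [slotwise_freeInclusion_mul_mul _ _ hx, h a, hl]
  exact LinearMap.congr_fun (LinearMap.eqLocus_eq_top.mp eqLocus_eq_top)

/-- The slotwise extension of a linear automorphism of `K⟨t₁,…,tₘ⟩`, as an automorphism. -/
def slotwiseEquiv (n : ℕ) (e : FreeAlgebra K (Fin m) ≃ₗ[K] FreeAlgebra K (Fin m)) :
    FreeAlgebra K (Fin (m + n)) ≃ₗ[K] FreeAlgebra K (Fin (m + n)) where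
  __ := slotwise n e.toLinearMap
  invFun := slotwise n e.symm.toLinearMap
  left_inv := slotwise_leftInverse e.left_inv
  right_inv := slotwise_leftInverse e.right_inv

theorem map_slotwise_incl (U : Submodule K (FreeAlgebra K (Fin m))) :
    (incl n U).map (slotwise n e) = incl n (U.map e) := by
  rw [incl, incl, ← Submodule.map_comp, ← Submodule.map_comp]
  congr 1
  exact LinearMap.ext (slotwise_freeInclusion e)

theorem map_slotwise_incl_mul_newLetters_mul (U : Submodule K (FreeAlgebra K (Fin m)))
    (V : Submodule K (FreeAlgebra K (Fin (m + n)))) :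
    (incl n U * newLetters K m n * V).map (slotwise n e) =
      incl n (U.map e) * newLetters K m n * V.map (slotwise n e) := by
  apply le_antisymm
  · refine Submodule.map_le_iff_le_comap.mpr (incl_mul_newLetters_mul_le fun a ha x hx l hl => ?_)
    rw [Submodule.mem_comap, slotwise_freeInclusion_mul_mul e a hx]
    exact Submodule.mul_mem_mul (Submodule.mul_mem_mul ⟨_, ⟨a, ha, rfl⟩, rfl⟩ hx) ⟨l, hl, rfl⟩
  · apply incl_mul_newLetters_mul_le
    rintro _ ⟨a, ha, rfl⟩ x hx _ ⟨l, hl, rfl⟩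
    rw [← slotwise_freeInclusion_mul_mul e a hx]
    exact ⟨_, Submodule.mul_mem_mul (Submodule.mul_mem_mul ⟨a, ha, rfl⟩ hx) hl, rfl⟩

end Slotwise

theorem freeInclusion_basisFreeMonoid (w : FreeMonoid (Fin m)) :
    freeInclusion K m n (FreeAlgebra.basisFreeMonoid K (Fin m) w) =
      FreeAlgebra.basisFreeMonoid K (Fin (m + n)) (FreeMonoid.map (Fin.castAdd n) w) := by
  induction w using FreeMonoid.inductionOn' with
  | one => simp [FreeAlgebra.basisFreeMonoid, ← MonoidAlgebra.one_def]
  | of_mul k w ih => simp [basisFreeMonoid_mul, basisFreeMonoid_of, freeInclusion_ι, ih]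

theorem IsMonomial.incl {U : Submodule K (FreeAlgebra K (Fin m))} (hU : IsMonomial U) :
    IsMonomial (incl n U) := by
  obtain ⟨J, rfl⟩ := hU
  refine ⟨FreeMonoid.map (Fin.castAdd n) '' J, ?_⟩
  rw [_root_.incl, Submodule.map_span, Set.image_image, Set.image_image]
  simp only [AlgHom.toLinearMap_apply, freeInclusion_basisFreeMonoid]

theorem isMonomial_newLetters : IsMonomial (newLetters K m n) := by
  refine ⟨Set.range fun j => FreeMonoid.of (Fin.natAdd m j), ?_⟩
  rw [newLetters, ← Set.range_comp]
  simp only [Function.comp_def, basisFreeMonoid_of]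

theorem IsInterlaced.isMonomial_map_slotwise {S : Set (Submodule K (FreeAlgebra K (Fin m)))}
    {e : FreeAlgebra K (Fin m) →ₗ[K] FreeAlgebra K (Fin m)} (he : ∀ U ∈ S, IsMonomial (U.map e))
    {V : Submodule K (FreeAlgebra K (Fin (m + n)))} (hV : IsInterlaced n S V) :
    IsMonomial (V.map (slotwise n e)) := by
  induction hV with
  | of_mem hU => exact map_slotwise_incl (n := n) e _ ▸ (he _ hU).incl
  | cons hU _ ih =>
    rw [map_slotwise_incl_mul_newLetters_mul]
    exact ((he _ hU).incl.mul isMonomial_newLetters).mul ih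
  | iSup _ ih => exact Submodule.map_iSup (slotwise n e) _ ▸ IsAdapted.iSup ih

theorem IsDistributiveCollection.of_isFinitelyInterlaced
    {G : Set (Submodule K (FreeAlgebra K (Fin m)))} (hG : IsDistributiveCollection G)
    {R : Set (Submodule K (FreeAlgebra K (Fin (m + n))))}
    (hR : ∀ V ∈ R, IsFinitelyInterlaced n G V) : IsDistributiveCollection R := by
  refine isDistributiveCollection_of_finite_subsets fun Q hQR hQ => ?_
  choose! slots slots_subset slots_finite interlaced using hR
  obtain ⟨e, he⟩ := (hG.mono (Set.iUnion₂_subset fun V hV => slots_subset V (hQR hV))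
    ).exists_linearEquiv_isMonomial (hQ.biUnion fun V hV => slots_finite V (hQR hV))
  let E := slotwiseEquiv n e
  refine isDistributiveCollection_of_isAdapted
    ((FreeAlgebra.basisFreeMonoid K (Fin (m + n))).map E.symm) fun V hV => ?_
  have monomial : IsMonomial (V.map E.toLinearMap) :=
    ((interlaced V (hQR hV)).mono (Set.subset_biUnion_of_mem hV)).isMonomial_map_slotwise he
  have map_symm_map : (V.map E.toLinearMap).map E.symm.toLinearMap = V := by
    rw [← Submodule.map_comp, LinearEquiv.symm_comp, Submodule.map_id]
  exact map_symm_map ▸ IsAdapted.map monomial E.symm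

theorem map_freeRetraction_newLetters :
    (newLetters K m n).map (freeRetraction K m n).toLinearMap = ⊥ := by
  rw [newLetters, Submodule.map_span, Submodule.span_eq_bot]
  rintro _ ⟨_, ⟨j, rfl⟩, rfl⟩
  simp [freeRetraction]

namespace RestrictsTo

theorem letters :
    RestrictsTo (freeInclusion K m n).toLinearMap (freeRetraction K m n).toLinearMap
      (letters K (Fin (m + n))) (letters K (Fin m)) := by
  have hri := freeRetraction_leftInverse (K := K) (m := m) (n := n)
  have newLetters_bot := of_map_le hri map_freeRetraction_newLetters (by simp)
  have sup_bot := sup hri (map_self hri (_root_.letters K (Fin m))) newLetters_bot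
  rwa [sup_bot_eq, ← incl, ← letters_eq_incl_sup_newLetters] at sup_bot

theorem augIdeal :
    RestrictsTo (freeInclusion K m n).toLinearMap (freeRetraction K m n).toLinearMap
      (augIdeal K (m + n)) (augIdeal K m) := by
  rw [augIdeal_eq_letters_mul_top, augIdeal_eq_letters_mul_top]
  exact mul freeRetraction_leftInverse letters (top freeRetraction_leftInverse)

theorem top_mul_incl_mul_top (hI : IsTwoSidedSubspace I) :
    RestrictsTo (freeInclusion K m n).toLinearMap (freeRetraction K m n).toLinearMap
      (⊤ * incl n I * ⊤) I := by
  have hri := freeRetraction_leftInverse (K := K) (m := m) (n := n)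
  have top_mul_top := mul hri (mul hri (top hri) (map_self hri I)) (top hri)
  rwa [hI.top_mul, hI.mul_top] at top_mul_top

end RestrictsTo

theorem IsDistributiveCollection.omegaGens_of_extension (hI : IsTwoSidedSubspace I)
    (h : IsDistributiveCollection (omegaGens K (m + n) (⊤ * incl n I * ⊤))) :
    IsDistributiveCollection (omegaGens K m I) := by
  have hri := freeRetraction_leftInverse (K := K) (m := m) (n := n)
  refine h.of_restrictsTo (i := (freeInclusion K m n).toLinearMap)
    (r := (freeRetraction K m n).toLinearMap) hri ?_
  rintro _ ⟨lam, mu, nu, rfl⟩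
  have aug_pow (k : ℕ) := RestrictsTo.augIdeal (K := K) (m := m) (n := n) |>.latticePow hri
    isTwoSidedSubspace_augIdeal isTwoSidedSubspace_augIdeal k
  have ideal_pow := RestrictsTo.top_mul_incl_mul_top (n := n) hI |>.latticePow hri
    (isTwoSidedSubspace_top_mul_mul_top _) hI mu
  exact ⟨_, ⟨lam, mu, nu, rfl⟩, ((aug_pow lam).mul hri ideal_pow).mul hri (aug_pow nu)⟩

end FreeExtension

theorem omega_distributive_iff_extension_general {K : Type*} [Field K] (m n : ℕ)
    {I : Submodule K (FreeAlgebra K (Fin m))} (hI : IsTwoSidedSubspace I) :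
    IsDistributiveCollection (omegaGens K m I) ↔
      IsDistributiveCollection
        (omegaGens K (m + n) (twoSidedSpan K (freeInclusion K m n '' I))) := by
  rw [twoSidedSpan_freeInclusion_image]
  exact ⟨fun h => h.of_isFinitelyInterlaced fun _ => isFinitelyInterlaced_of_mem_omegaGens hI,
    .omegaGens_of_extension hI⟩

/-- Let `L^t = K⟨t₁,…,tₘ⟩ ⊆ L = K⟨t₁,…,tₘ,x₁,…,xₙ⟩` be free algebras,
`I` a two-sided ideal of `L^t` generated by homogeneous elements of degree 2 and `⟨I⟩`
the two-sided ideal of `L` generated by `I`. Then the lattice `Ω(L^t, I)` is distributive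
iff the lattice `Ω(L, ⟨I⟩)` is distributive. -/
theorem omega_distributive_iff_extension
    {K : Type*} [Field K] (m n : ℕ)
    (I : Submodule K (FreeAlgebra K (Fin m)))
    (hI : ∃ S : Set (FreeAlgebra K (Fin m)),
      (∀ g ∈ S, g ∈ wordLengthComponent K m 2) ∧ I = twoSidedSpan K S) :
    IsDistributiveCollection (omegaGens K m I) ↔
      IsDistributiveCollection (omegaGens K (m + n)
        (twoSidedSpan K
          ((FreeAlgebra.lift K fun k : Fin m => FreeAlgebra.ι K (Fin.castAdd n k)) ''
            (I : Set (FreeAlgebra K (Fin m)))))) := by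
  obtain ⟨S, -, rfl⟩ := hI
  exact omega_distributive_iff_extension_general m n (isTwoSidedSubspace_twoSidedSpan S)
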